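/- Let M ⊆ GL₂(ℤ/ℓℤ) be a solvable subgroup for a prime ℓ. Then the fourth iterated commutator subgroup M^(4) is trivial, where M^(0) = M and M^(n) = [M^(n-1), M^(n-1)]. -/

import Mathlib

open Matrix

namespace SolvGL2

abbrev M2 (F : Type*) := Matrix (Fin 2) (Fin 2) F

variable {F : Type*} [Field F] {G : Type*} [Group G]

/-- scalar matrices -/
def IsScal (Z : M2 F) : Prop := ∃ c : F, Z = c • (1 : M2 F)

lemma cent (Z X : M2 F) (hZ : ¬ IsScal Z) (h : X * Z = Z * X) :
    ∃ r s : F, X = r • (1 : M2 F) + s • Z := by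
  have h00 := congrFun (congrFun h 0) 0
  have h01 := congrFun (congrFun h 0) 1
  have h10 := congrFun (congrFun h 1) 0
  simp only [Matrix.mul_apply, Fin.sum_univ_two] at h00 h01 h10
  have key : ∀ r s : F, X 0 0 = r + s * Z 0 0 → X 0 1 = s * Z 0 1 → X 1 0 = s * Z 1 0 →
      X 1 1 = r + s * Z 1 1 → ∃ r s : F, X = r • (1 : M2 F) + s • Z := by
    intro r s h1 h2 h3 h4
    refine ⟨r, s, ?_⟩
    ext i j
    fin_cases i <;> fin_cases j <;> simp [h1, h2, h3, h4]
  by_cases hq : Z 0 1 = 0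
  · by_cases hu : Z 1 0 = 0
    · have hpv : Z 0 0 - Z 1 1 ≠ 0 := by
        intro hpv
        apply hZ
        refine ⟨Z 0 0, ?_⟩
        ext i j
        fin_cases i <;> fin_cases j <;> simp [hq, hu]
        linear_combination -hpv
      have e1 : X 0 1 = 0 := by
        apply (mul_eq_zero.mp (?_ : (Z 0 0 - Z 1 1) * X 0 1 = 0)).resolve_left hpv
        linear_combination -h01 + (X 0 0 - X 1 1) * hq
      have e2 : X 1 0 = 0 := by
        apply (mul_eq_zero.mp (?_ : (Z 0 0 - Z 1 1) * X 1 0 = 0)).resolve_left hpv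
        linear_combination h10 + (X 0 0 - X 1 1) * hu
      refine key (X 0 0 - (X 0 0 - X 1 1) / (Z 0 0 - Z 1 1) * Z 0 0)
        ((X 0 0 - X 1 1) / (Z 0 0 - Z 1 1)) (by ring) (by rw [e1, hq]; ring) (by rw [e2, hu]; ring) ?_
      field_simp
      ring
    · refine key (X 0 0 - X 1 0 / Z 1 0 * Z 0 0) (X 1 0 / Z 1 0) (by ring) ?_ ?_ ?_
      · field_simp
        linear_combination h00
      · field_simp
      · field_simp
        linear_combination h10
  · refine key (X 0 0 - X 0 1 / Z 0 1 * Z 0 0) (X 0 1 / Z 0 1) (by ring) ?_ ?_ ?_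
    · field_simp
    · field_simp
      linear_combination -h00
    · field_simp
      linear_combination -h01

lemma cent_comm (Z X Y : M2 F) (hZ : ¬ IsScal Z) (h : X * Z = Z * X) (h' : Y * Z = Z * Y) :
    X * Y = Y * X := by
  obtain ⟨r, s, rfl⟩ := cent Z X hZ h
  simp only [add_mul, mul_add, smul_mul_assoc, mul_smul_comm, one_mul, mul_one, h']

lemma scal_comm {X : M2 F} (h : IsScal X) (Y : M2 F) : X * Y = Y * X := by
  obtain ⟨c, rfl⟩ := h
  simp

/-- the elements of `G` commuting with a given matrix -/
def centr (ρ : G →* M2 F) (A : M2 F) : Subgroup G where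
  carrier := {g | ρ g * A = A * ρ g}
  one_mem' := by simp
  mul_mem' := by
    intro a b ha hb
    simp only [Set.mem_setOf_eq, map_mul] at *
    rw [mul_assoc, hb, ← mul_assoc, ha, mul_assoc]
  inv_mem' := by
    intro a ha
    simp only [Set.mem_setOf_eq] at *
    have h1 : ρ a * ρ a⁻¹ = 1 := by rw [← map_mul]; simp
    have h2 : ρ a⁻¹ * ρ a = 1 := by rw [← map_mul]; simp
    calc ρ a⁻¹ * A = ρ a⁻¹ * (A * ρ a) * ρ a⁻¹ := by simp only [mul_assoc, h1, mul_one]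
      _ = A * ρ a⁻¹ := by rw [← ha, ← mul_assoc, h2, one_mul]

lemma mem_centr (ρ : G →* M2 F) (A : M2 F) (g : G) : g ∈ centr ρ A ↔ ρ g * A = A * ρ g := Iff.rfl

lemma rho_inj_comm (ρ : G →* M2 F) (hρ : Function.Injective ρ) {x y : G}
    (h : ρ x * ρ y = ρ y * ρ x) : x * y = y * x := hρ (by simpa using h)

/-- commutators lie in `centr` if the two products act the same way -/
lemma comm_mem_centr (ρ : G →* M2 F) (A P : M2 F) (g h : G)
    (h1 : ρ (g⁻¹ * h⁻¹) * A = P * ρ (g⁻¹ * h⁻¹)) (h2 : ρ (h⁻¹ * g⁻¹) * A = P * ρ (h⁻¹ * g⁻¹)) :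
    g * h * g⁻¹ * h⁻¹ ∈ centr ρ A := by
  have e : g * h * g⁻¹ * h⁻¹ = (h⁻¹ * g⁻¹)⁻¹ * (g⁻¹ * h⁻¹) := by group
  rw [e, mem_centr, map_mul]
  set k := g⁻¹ * h⁻¹
  set l := h⁻¹ * g⁻¹
  have i1 : ρ l * ρ l⁻¹ = 1 := by rw [← map_mul]; simp
  have i2 : ρ l⁻¹ * ρ l = 1 := by rw [← map_mul]; simp
  have h3 : A * ρ l⁻¹ = ρ l⁻¹ * P := by
    calc A * ρ l⁻¹ = ρ l⁻¹ * (ρ l * A) * ρ l⁻¹ := by rw [← mul_assoc, i2, one_mul]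
      _ = ρ l⁻¹ * P := by rw [h2]; simp only [mul_assoc, i1, mul_one]
  rw [← mul_assoc, h3, mul_assoc, h1, mul_assoc]

lemma D2_of_centr (ρ : G →* M2 F) (hρ : Function.Injective ρ) (A : M2 F) (hA : ¬ IsScal A)
    (h : ∀ g h : G, g * h * g⁻¹ * h⁻¹ ∈ centr ρ A) : derivedSeries G 2 = ⊥ := by
  have h1 : derivedSeries G 1 ≤ centr ρ A := by
    rw [derivedSeries_succ, Subgroup.commutator_le]
    intro g _ k _
    exact h g k
  rw [derivedSeries_succ, eq_bot_iff, Subgroup.commutator_le]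
  intro g hg k hk
  rw [Subgroup.mem_bot, commutatorElement_eq_one_iff_mul_comm]
  exact rho_inj_comm ρ hρ (cent_comm A _ _ hA (h1 hg) (h1 hk))

lemma act_mul (ρ : G →* M2 F) (A : M2 F) (g h : G) (r s r' s' : F)
    (hg : ρ g * A = (r • (1 : M2 F) + s • A) * ρ g)
    (hh : ρ h * A = (r' • (1 : M2 F) + s' • A) * ρ h) :
    ρ (g * h) * A = ((r' + s' * r) • (1 : M2 F) + (s * s') • A) * ρ (g * h) := by
  rw [map_mul, mul_assoc, hh, ← mul_assoc, mul_add, mul_smul_comm, mul_smul_comm, hg, mul_one,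
    ← mul_assoc]
  congr 1
  simp only [add_mul, smul_add, smul_mul_assoc, one_mul, add_smul, smul_smul, mul_comm s s']
  abel

lemma trace_conj (ρ : G →* M2 F) (A P : M2 F) (g : G) (h : ρ g * A = P * ρ g) :
    P.trace = A.trace := by
  have i1 : ρ g * ρ g⁻¹ = 1 := by rw [← map_mul]; simp
  have i2 : ρ g⁻¹ * ρ g = 1 := by rw [← map_mul]; simp
  have : P = ρ g * A * ρ g⁻¹ := by rw [h, mul_assoc, i1, mul_one]
  rw [this, Matrix.trace_mul_comm, ← mul_assoc, i2, one_mul]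

lemma lemma1 (ρ : G →* M2 F) (hρ : Function.Injective ρ) (h2 : (2 : F) ≠ 0)
    (N : Subgroup G) (hN : N.Normal) (hab : ∀ x ∈ N, ∀ y ∈ N, x * y = y * x)
    (a : G) (ha : a ∈ N) (hA : ¬ IsScal (ρ a)) : derivedSeries G 2 = ⊥ := by
  have act : ∀ g : G, ∃ r s : F, ρ g * ρ a = (r • (1 : M2 F) + s • ρ a) * ρ g := by
    intro g
    have hc : ρ (g * a * g⁻¹) * ρ a = ρ a * ρ (g * a * g⁻¹) := by
      rw [← map_mul, ← map_mul, hab _ (hN.conj_mem a ha g) _ ha]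
    obtain ⟨r, s, h⟩ := cent _ _ hA hc
    refine ⟨r, s, ?_⟩
    rw [← h, ← map_mul, ← map_mul]
    congr 1
    group
  apply D2_of_centr ρ hρ (ρ a) hA
  intro g h
  obtain ⟨r, s, e⟩ := act g⁻¹
  obtain ⟨r', s', e'⟩ := act h⁻¹
  have k1 := act_mul ρ _ _ _ _ _ _ _ e e'
  have k2 := act_mul ρ _ _ _ _ _ _ _ e' e
  have t1 := trace_conj ρ _ _ _ k1
  have t2 := trace_conj ρ _ _ _ k2
  simp only [trace_add, trace_smul, trace_one, smul_eq_mul, Fintype.card_fin] at t1 t2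
  push_cast at t1 t2
  have ec : r' + s' * r = r + s * r' := by
    apply mul_right_cancel₀ h2
    linear_combination t1 - t2
  rw [ec, mul_comm s s'] at k1
  exact comm_mem_centr ρ _ _ g h k1 k2

lemma perm3 : derivedSeries (Equiv.Perm (Fin 3)) 2 = ⊥ := by
  have h1 : derivedSeries (Equiv.Perm (Fin 3)) 1 ≤ (Equiv.Perm.sign).ker := by
    rw [derivedSeries_succ, Subgroup.commutator_le]
    intro g _ k _
    rw [MonoidHom.mem_ker, map_commutatorElement, commutatorElement_eq_one_iff_mul_comm, mul_comm]
  have h2 : ∀ x y : Equiv.Perm (Fin 3), Equiv.Perm.sign x = 1 → Equiv.Perm.sign y = 1 →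
      x * y = y * x := by decide
  rw [derivedSeries_succ, eq_bot_iff, Subgroup.commutator_le]
  intro g hg k hk
  rw [Subgroup.mem_bot, commutatorElement_eq_one_iff_mul_comm]
  exact h2 _ _ (h1 hg) (h1 hk)

lemma scal_of_comm {X Y Z : M2 F} (hXY : X * Y ≠ Y * X) (h1 : Z * X = X * Z)
    (h2 : Z * Y = Y * Z) : IsScal Z := by
  by_contra hZ
  exact hXY (cent_comm Z X Y hZ h1.symm h2.symm)

lemma main (ρ : G →* M2 F) (hρ : Function.Injective ρ) (h2 : (2 : F) ≠ 0)
    (hG : IsSolvable G) : derivedSeries G 4 = ⊥ := by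
  classical
  by_cases hD2 : derivedSeries G 2 = ⊥
  · rw [eq_bot_iff, ← hD2]
    exact derivedSeries_antitone G (by norm_num)
  have hex := hG.solvable
  have hmin := fun m => @Nat.find_min _ _ hex m
  have hspec := Nat.find_spec hex
  have hn : 3 ≤ Nat.find hex := by
    by_contra hlt
    apply hD2
    rw [eq_bot_iff, ← hspec]
    exact derivedSeries_antitone G (by omega)
  obtain ⟨m, hm⟩ := Nat.exists_eq_add_of_le' hn
  rw [hm] at hspec hmin
  have hA0 : derivedSeries G (m + 2) ≠ ⊥ := hmin (m + 2) (by omega)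
  -- the last term is scalar, with entries ±1
  have hdet : ∀ x ∈ derivedSeries G 1, (ρ x).det = 1 := by
    have : derivedSeries G 1 ≤ ((Units.map (Matrix.detMonoidHom (n := Fin 2) (R := F))).comp ρ.toHomUnits).ker := by
      rw [derivedSeries_succ, Subgroup.commutator_le]
      intro g _ k _
      rw [MonoidHom.mem_ker, map_commutatorElement, commutatorElement_eq_one_iff_mul_comm, mul_comm]
    intro x hx
    have := congrArg Units.val (MonoidHom.mem_ker.mp (this hx))
    simpa using this
  have hscal : ∀ x ∈ derivedSeries G (m + 2), ρ x = 1 ∨ ρ x = -1 := by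
    intro x hx
    have hs : IsScal (ρ x) := by
      by_contra hns
      refine hD2 (lemma1 ρ hρ h2 (derivedSeries G (m + 2)) inferInstance ?_ x hx hns)
      intro y hy z hz
      rw [← commutatorElement_eq_one_iff_mul_comm, ← Subgroup.mem_bot, ← hspec]
      exact Subgroup.commutator_mem_commutator hy hz
    obtain ⟨c, hc⟩ := hs
    have hd := hdet x (derivedSeries_antitone G (by omega) hx)
    rw [hc] at hd
    simp [Matrix.det_smul] at hd
    rcases hd with hd | hd
    · left; rw [hc, hd, one_smul]
    · right; rw [hc, hd, neg_smul, one_smul]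
  -- commutation up to sign in B
  have hsgn : ∀ x ∈ derivedSeries G (m + 1), ∀ y ∈ derivedSeries G (m + 1),
      ρ x * ρ y = ρ y * ρ x ∨ ρ x * ρ y = - (ρ y * ρ x) := by
    intro x hx y hy
    have hc : (x * y * x⁻¹ * y⁻¹) ∈ derivedSeries G (m + 2) := Subgroup.commutator_mem_commutator hx hy
    have e : ρ x * ρ y = ρ (x * y * x⁻¹ * y⁻¹) * (ρ y * ρ x) := by
      rw [← map_mul, ← map_mul, ← map_mul]
      congr 1
      group
    rcases hscal _ hc with h | h
    · left; rw [e, h, one_mul]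
    · right; rw [e, h, neg_one_mul]
  obtain ⟨x, hx, y, hy, hxy⟩ : ∃ x ∈ derivedSeries G (m + 1), ∃ y ∈ derivedSeries G (m + 1),
      x * y ≠ y * x := by
    by_contra! hcon
    apply hA0
    rw [derivedSeries_succ, eq_bot_iff, Subgroup.commutator_le]
    intro g hg k hk
    rw [Subgroup.mem_bot, commutatorElement_eq_one_iff_mul_comm]
    exact hcon g hg k hk
  have hXYne : ρ x * ρ y ≠ ρ y * ρ x := fun h => hxy (rho_inj_comm ρ hρ h)
  have hXY : ρ x * ρ y = - (ρ y * ρ x) := (hsgn x hx y hy).resolve_left hXYne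
  -- nonzero facts
  have hne : ∀ g : G, ρ g ≠ 0 := by
    intro g hg
    have i1 : ρ g * ρ g⁻¹ = 1 := by rw [← map_mul]; simp
    rw [hg, zero_mul] at i1
    exact zero_ne_one i1
  have hneg : ∀ g : G, ρ g ≠ - ρ g := by
    intro g hg
    have : (2 : F) • ρ g = 0 := by
      rw [two_smul]
      nth_rewrite 1 [hg]
      simp
    exact (smul_ne_zero h2 (hne g)) this
  let l : Fin 3 → G := ![x, y, x * y]
  have hlB : ∀ i, l i ∈ derivedSeries G (m + 1) := by
    intro i
    fin_cases i
    · exact hx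
    · exact hy
    · exact mul_mem hx hy
  have hYX : ρ y * ρ x = - (ρ x * ρ y) := by rw [hXY, neg_neg]
  have hanti : ∀ i j, i ≠ j → ρ (l i) * ρ (l j) = - (ρ (l j) * ρ (l i)) := by
    have a1 : ρ x * ρ (x * y) = - (ρ (x * y) * ρ x) := by
      rw [map_mul, mul_assoc, hYX, mul_neg, neg_neg]
    have a2 : ρ y * ρ (x * y) = - (ρ (x * y) * ρ y) := by
      rw [map_mul, ← mul_assoc, hYX, neg_mul]
    intro i j hij
    fin_cases i <;> fin_cases j <;> first | exact absurd rfl hij | skip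
    · exact hXY
    · exact a1
    · exact hYX
    · exact a2
    · show ρ (x * y) * ρ x = - (ρ x * ρ (x * y))
      rw [a1, neg_neg]
    · show ρ (x * y) * ρ y = - (ρ y * ρ (x * y))
      rw [a2, neg_neg]
  have huniq : ∀ i j (c : F), ρ (l i) = c • ρ (l j) → i = j := by
    intro i j c h
    by_contra hij
    have h1 := hanti i j hij
    have h3 : ρ (l j) * ρ (l i) = ρ (l i) * ρ (l j) := by
      rw [h, smul_mul_assoc, mul_smul_comm]
    rw [h3, ← map_mul] at h1
    exact hneg _ h1
  have hlscal : ∀ i, ¬ IsScal (ρ (l i)) := by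
    intro i hs
    have hij : i ≠ i + 1 := by fin_cases i <;> decide
    have h1 := hanti i (i + 1) hij
    rw [← scal_comm hs, ← map_mul] at h1
    exact hneg _ h1
  -- structure of B
  have hB : ∀ b ∈ derivedSeries G (m + 1), ¬ IsScal (ρ b) → ∃ i, ∃ c : F, ρ b = c • ρ (l i) := by
    intro b hb hbs
    have fin : ∀ i, IsScal (ρ (b * l i)) → ∃ i, ∃ c : F, ρ b = c • ρ (l i) := by
      intro i ⟨c, hc⟩
      -- `l i` anticommutes with something, so its square is a scalar
      have hsq : IsScal (ρ (l i * l i)) := by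
        have g1 : ∀ j, ρ (l i * l i) * ρ (l j) = ρ (l j) * ρ (l i * l i) := by
          intro j
          by_cases hij : i = j
          · subst hij
            rw [map_mul, mul_assoc]
          · rw [map_mul, mul_assoc, hanti i j hij, mul_neg, ← mul_assoc, hanti i j hij, neg_mul,
              neg_neg, mul_assoc]
        exact scal_of_comm hXYne (g1 0) (g1 1)
      obtain ⟨d, hd⟩ := hsq
      have hd0 : d ≠ 0 := by
        rintro rfl
        exact hne _ (hd.trans (zero_smul _ _))
      refine ⟨i, c * d⁻¹, ?_⟩
      have : d • ρ b = c • ρ (l i) := by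
        calc d • ρ b = ρ b * ρ (l i * l i) := by rw [hd]; simp
          _ = ρ (b * l i) * ρ (l i) := by simp only [map_mul, mul_assoc]
          _ = c • ρ (l i) := by rw [hc]; simp
      rw [mul_comm, mul_smul, ← this, smul_smul, inv_mul_cancel₀ hd0, one_smul]
    rcases hsgn b hb x hx with h1 | h1 <;> rcases hsgn b hb y hy with h3 | h3
    · exact absurd (scal_of_comm hXYne h1 h3) hbs
    · apply fin 0
      show IsScal (ρ (b * x))
      apply scal_of_comm hXYne <;> rw [map_mul]
      · rw [h1, mul_assoc, h1]
      · rw [mul_assoc, hXY, mul_neg, ← mul_assoc, h3, neg_mul, neg_neg, mul_assoc]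
    · apply fin 1
      show IsScal (ρ (b * y))
      apply scal_of_comm hXYne <;> rw [map_mul]
      · rw [mul_assoc, hYX, mul_neg, ← mul_assoc, h1, neg_mul, neg_neg, mul_assoc]
      · rw [h3, mul_assoc, h3]
    · apply fin 2
      show IsScal (ρ (b * (x * y)))
      apply scal_of_comm hXYne <;> rw [map_mul, map_mul]
      · calc ρ b * (ρ x * ρ y) * ρ x = ρ b * ρ x * (ρ y * ρ x) := by simp only [mul_assoc]
          _ = ρ x * (ρ b * (ρ x * ρ y)) := by
            rw [h1, hYX]; simp only [mul_assoc, neg_mul, mul_neg, neg_neg]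
      · calc ρ b * (ρ x * ρ y) * ρ y = -((ρ b * ρ y) * (ρ x * ρ y)) := by
              rw [hXY]; simp only [mul_assoc, neg_mul, mul_neg, hXY]
          _ = ρ y * (ρ b * (ρ x * ρ y)) := by
            rw [h3]; simp only [mul_assoc, neg_mul, neg_neg]
  -- the permutation action
  have hact : ∀ (g : G) (i : Fin 3), ∃ j, ∃ c : F, ρ (g * l i * g⁻¹) = c • ρ (l j) := by
    intro g i
    apply hB
    · exact (inferInstance : (derivedSeries G (m + 1)).Normal).conj_mem _ (hlB i) g
    · rintro ⟨c, hc⟩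
      apply hlscal i
      refine ⟨c, ?_⟩
      have : l i = g⁻¹ * (g * l i * g⁻¹) * g := by group
      rw [this, map_mul, map_mul, hc]
      simp [← map_mul]
  choose f cf hf using hact
  have hf_uniq : ∀ g i j (c : F), ρ (g * l i * g⁻¹) = c • ρ (l j) → f g i = j := by
    intro g i j c h
    have h1 := hf g i
    have hc0 : cf g i ≠ 0 := by
      intro h0
      rw [h0, zero_smul] at h1
      exact hne _ h1
    apply huniq _ _ ((cf g i)⁻¹ * c)
    rw [mul_smul, ← h, h1, smul_smul, inv_mul_cancel₀ hc0, one_smul]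
  let φ : G →* Function.End (Fin 3) :=
    { toFun := f
      map_one' := by
        funext i
        apply hf_uniq 1 i i 1
        simp
      map_mul' := by
        intro g h
        funext i
        apply hf_uniq (g * h) i _ (cf h i * cf g (f h i))
        have e : g * h * l i * (g * h)⁻¹ = g * (h * l i * h⁻¹) * g⁻¹ := by group
        rw [e, map_mul, map_mul, hf h i, mul_smul_comm, smul_mul_assoc, ← map_mul, ← map_mul,
          hf g, smul_smul] 
        rfl }
  have hker : ∀ g ∈ derivedSeries G 2, ∀ i, f g i = i := by
    intro g hg i
    have h1 := map_derivedSeries_le_derivedSeries φ.toHomPerm 2 (Subgroup.mem_map_of_mem _ hg)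
    rw [perm3, Subgroup.mem_bot] at h1
    exact congrArg (fun p : Equiv.Perm (Fin 3) => p i) h1
  have hD3 : ∀ i, derivedSeries G 3 ≤ centr ρ (ρ (l i)) := by
    intro i
    rw [derivedSeries_succ, Subgroup.commutator_le]
    intro g hg h hh
    have act : ∀ k ∈ derivedSeries G 2,
        ∃ s : F, ρ k * ρ (l i) = ((0 : F) • (1 : M2 F) + s • ρ (l i)) * ρ k := by
      intro k hk
      refine ⟨cf k i, ?_⟩
      have h1 := hf k i
      rw [hker k hk i] at h1
      rw [zero_smul, zero_add, ← h1, ← map_mul, ← map_mul]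
      congr 1
      group
    obtain ⟨s, e⟩ := act g⁻¹ (inv_mem hg)
    obtain ⟨s', e'⟩ := act h⁻¹ (inv_mem hh)
    have k1 := act_mul ρ _ _ _ _ _ _ _ e e'
    have k2 := act_mul ρ _ _ _ _ _ _ _ e' e
    rw [mul_zero, mul_comm s s'] at k1
    rw [mul_zero] at k2
    exact comm_mem_centr ρ _ _ g h k1 k2
  rw [derivedSeries_succ, eq_bot_iff, Subgroup.commutator_le]
  intro g hg k hk
  rw [Subgroup.mem_bot, commutatorElement_eq_one_iff_mul_comm]
  apply rho_inj_comm ρ hρ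
  exact scal_comm (scal_of_comm hXYne (hD3 0 hg) (hD3 1 hg)) _

lemma two_case (ρ : G →* M2 (ZMod 2)) (hρ : Function.Injective ρ) : derivedSeries G 2 = ⊥ := by
  have key : ∀ a b c d : ZMod 2, a * d - b * c ≠ 0 → ∃ r : ZMod 2,
      b = r * a + c ∧ a + b = r * b + d ∧ d = r * c + (a + c) ∧ c + d = r * d + (b + d) := by
    decide
  have act : ∀ g : G, ∃ r : ZMod 2, ρ g * !![0, 1; 1, 1] =
      (r • (1 : M2 (ZMod 2)) + (1 : ZMod 2) • !![0, 1; 1, 1]) * ρ g := by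
    intro g
    have hd : (ρ g).det ≠ 0 := by
      have i1 : ρ g * ρ g⁻¹ = 1 := by rw [← map_mul]; simp
      intro h
      have := congrArg Matrix.det i1
      simp [h] at this
    rw [Matrix.det_fin_two] at hd
    obtain ⟨r, h1, h2, h3, h4⟩ := key _ _ _ _ hd
    refine ⟨r, ?_⟩
    rw [add_mul]
    ext i j
    fin_cases i <;> fin_cases j <;> simp [Matrix.mul_apply, Matrix.vecMul, dotProduct, Fin.sum_univ_two] <;> assumption
  have hns : ¬ IsScal (!![0, 1; 1, 1] : M2 (ZMod 2)) := by
    rintro ⟨c, hc⟩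
    have := congrFun (congrFun hc 0) 1
    simp at this
  apply D2_of_centr ρ hρ _ hns
  intro g h
  obtain ⟨r, e⟩ := act g⁻¹
  obtain ⟨r', e'⟩ := act h⁻¹
  have k1 := act_mul ρ _ _ _ _ _ _ _ e e'
  have k2 := act_mul ρ _ _ _ _ _ _ _ e' e
  rw [one_mul] at k1 k2
  rw [add_comm r' r] at k1
  exact comm_mem_centr ρ _ _ g h k1 k2

end SolvGL2

/-- Let `M ⊆ GL₂(ℤ/ℓℤ)` be a solvable subgroup for a prime `ℓ`. Then the
fourth iterated commutator subgroup `M⁽⁴⁾` is trivial. -/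
theorem solvable_subgroup_GL2_derived_four
    (ℓ : ℕ) [Fact ℓ.Prime]
    (M : Subgroup (GL (Fin 2) (ZMod ℓ)))
    (hM : IsSolvable ↥M) :
    derivedSeries ↥M 4 = ⊥ := by
  let ρ : M →* Matrix (Fin 2) (Fin 2) (ZMod ℓ) := (Units.coeHom _).comp M.subtype
  have hρ : Function.Injective ρ := fun a b h => Subtype.ext (Units.ext h)
  by_cases h2 : (2 : ZMod ℓ) = 0
  · have hl : ℓ = 2 := by
      have h3 : ((2 : ℕ) : ZMod ℓ) = 0 := by exact_mod_cast h2
      rw [ZMod.natCast_eq_zero_iff] at h3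
      exact (Nat.prime_dvd_prime_iff_eq (Fact.out) Nat.prime_two).mp h3
    subst hl
    have h := SolvGL2.two_case ρ hρ
    rw [eq_bot_iff, ← h]
    exact derivedSeries_antitone _ (by norm_num)
  · exact SolvGL2.main ρ hρ h2 hM
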